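/- arXiv:2411.04070 — 2 statements merged into one kernel-verified Lean document; each statement's English description precedes it below -/
import Mathlib

section
/- Let κ be a (P,ρ)-kernel on a locally finite weakly ranked poset (P,ρ) and let ℋ be the associated Chow function. Then ℋ is symmetric: for every s < t in P, ℋ_{st}(x) = x^{ρ_{st}−1} ℋ_{st}(1/x). -/
/-!
Work in the incidence algebra `I(P)` over `ℤ[x]`, realised by Mathlib's `IncidenceAlgebra`, and
write `A` for the reduced kernel `κ̄`. Evaluating `κ^rev κ = δ` at `x = 1`, where reversal does
nothing, shows that `κ_{st}(1) = 0` for `s < t`, so the division defining `A` is exact and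
`(x - 1) A = κ - x δ` (`red_relation`). Reversing this entrywise, with one extra degree for the
factor `x - 1`, gives `(1 - x) A^rev = x κ^rev - δ` (`rev_red_relation`).

The first relation and `A ℋ = -δ` give `κ ℋ = x ℋ + (1 - x) δ`. Since reversal is multiplicative on
elements of bounded degree (`rev_conv`), `A^rev ℋ^rev = ℋ^rev A^rev = -δ`. Hence both `ℋ^rev` and
`κ ℋ` are sent to `(x - 1) δ` by left multiplication with `(1 - x) A^rev = x κ^rev - δ`, and this
element may be cancelled. So `ℋ^rev = κ ℋ = x ℋ + (1 - x) δ`; at `s < t` this says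
`x^{ρ_{st}} ℋ_{st}(1/x) = x ℋ_{st}(x)`, which is the asserted symmetry, degree bound included.
-/


open Finset Polynomial
open scoped Classical

noncomputable section

variable {α : Type*}

/-- Convolution product in the incidence algebra of a locally finite poset over `ℤ[x]`.
Only the values on intervals `s ≤ t` are relevant. -/
def conv [PartialOrder α] [LocallyFiniteOrder α] (a b : α → α → Polynomial ℤ) :
    α → α → Polynomial ℤ :=
  fun s t => ∑ w ∈ Finset.Icc s t, a s w * b w t

/-- The identity `δ` of the incidence algebra. -/
def dlt [PartialOrder α] : α → α → Polynomial ℤ :=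
  fun s t => if s = t then 1 else 0

/-- The involution `a ↦ a^rev`, given by `(a^rev)_{st}(x) = x^{ρ_{st}} a_{st}(1/x)`. -/
def rev (ρ : α → α → ℕ) (a : α → α → Polynomial ℤ) : α → α → Polynomial ℤ :=
  fun s t => (a s t).reflect (ρ s t)

/-- A weak rank function on a poset. -/
structure IsWeakRank [Preorder α] (ρ : α → α → ℕ) : Prop where
  pos : ∀ ⦃s t : α⦄, s < t → 0 < ρ s t
  add : ∀ ⦃s w t : α⦄, s ≤ w → w ≤ t → ρ s t = ρ s w + ρ w t

/-- `κ` is a `(P,ρ)`-kernel: it lies in `I_ρ(P)`, is `1` on the diagonal, and `κ⁻¹ = κ^rev`. -/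
structure IsKernel [PartialOrder α] [LocallyFiniteOrder α] (ρ : α → α → ℕ)
    (κ : α → α → Polynomial ℤ) : Prop where
  degLE : ∀ ⦃s t : α⦄, s ≤ t → (κ s t).natDegree ≤ ρ s t
  diag : ∀ s : α, κ s s = 1
  left : ∀ ⦃s t : α⦄, s ≤ t → conv (rev ρ κ) κ s t = dlt s t
  right : ∀ ⦃s t : α⦄, s ≤ t → conv κ (rev ρ κ) s t = dlt s t

/-- The reduced kernel `κ̄`: `κ̄_{st} = κ_{st}/(x-1)` for `s < t` and `κ̄_{ss} = -1`. -/
def red [PartialOrder α] (κ : α → α → Polynomial ℤ) : α → α → Polynomial ℤ :=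
  fun s t => if s = t then -1 else κ s t /ₘ (X - 1)

/-- `H` is the Chow function of `κ`, i.e. `H = -(κ̄)⁻¹`. -/
structure IsChow [PartialOrder α] [LocallyFiniteOrder α] (κ H : α → α → Polynomial ℤ) : Prop where
  left : ∀ ⦃s t : α⦄, s ≤ t → conv (red κ) H s t = -dlt s t
  right : ∀ ⦃s t : α⦄, s ≤ t → conv H (red κ) s t = -dlt s t

/-- `f` is the right KLS function of the kernel `κ`. -/
structure IsRightKLS [PartialOrder α] [LocallyFiniteOrder α] (ρ : α → α → ℕ)
    (κ f : α → α → Polynomial ℤ) : Prop where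
  diag : ∀ s : α, f s s = 1
  degLT : ∀ ⦃s t : α⦄, s < t → 2 * (f s t).natDegree < ρ s t
  rev_eq : ∀ ⦃s t : α⦄, s ≤ t → rev ρ f s t = conv κ f s t

/-- `g` is the left KLS function of the kernel `κ`. -/
structure IsLeftKLS [PartialOrder α] [LocallyFiniteOrder α] (ρ : α → α → ℕ)
    (κ g : α → α → Polynomial ℤ) : Prop where
  diag : ∀ s : α, g s s = 1
  degLT : ∀ ⦃s t : α⦄, s < t → 2 * (g s t).natDegree < ρ s t
  rev_eq : ∀ ⦃s t : α⦄, s ≤ t → rev ρ g s t = conv g κ s t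

/-- `p` is symmetric with center of symmetry `d/2`, i.e. `p(x) = x^d p(1/x)`. -/
def PolySymm (d : ℕ) (p : Polynomial ℤ) : Prop := p.natDegree ≤ d ∧ p.reflect d = p

/-- All coefficients of `p` are non-negative. -/
def PolyNonneg (p : Polynomial ℤ) : Prop := ∀ n, 0 ≤ p.coeff n

/-- The coefficient sequence of `p` is unimodal. -/
def PolyUnimodal (p : Polynomial ℤ) : Prop :=
  ∃ j, (∀ i < j, p.coeff i ≤ p.coeff (i + 1)) ∧ ∀ i, j ≤ i → p.coeff (i + 1) ≤ p.coeff i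

end

section ChowSymmetry

variable {β : Type*} [PartialOrder β]

/-- The element of the incidence algebra with the values of `a` on intervals `s ≤ t`; the values
of `a` at other pairs are discarded. -/
noncomputable def toInc (a : β → β → Polynomial ℤ) : IncidenceAlgebra (Polynomial ℤ) β :=
  ⟨fun s t => if s ≤ t then a s t else 0, fun _ _ h => if_neg h⟩

lemma toInc_apply (a : β → β → Polynomial ℤ) {s t : β} (h : s ≤ t) : toInc a s t = a s t :=
  if_pos h

lemma toInc_congr {a b : β → β → Polynomial ℤ} (h : ∀ s t, s ≤ t → a s t = b s t) :
    toInc a = toInc b := by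
  ext1 s t hst
  rw [toInc_apply a hst, toInc_apply b hst, h s t hst]

lemma IsWeakRank.self {ρ : β → β → ℕ} (hρ : IsWeakRank ρ) (s : β) : ρ s s = 0 := by
  have := hρ.add (le_refl s) (le_refl s)
  omega

lemma reflect_neg' (N : ℕ) (p : Polynomial ℤ) : (-p).reflect N = -p.reflect N := by
  ext; simp

lemma reflect_sum' {ι : Type*} (N : ℕ) (S : Finset ι) (f : ι → Polynomial ℤ) :
    (∑ i ∈ S, f i).reflect N = ∑ i ∈ S, (f i).reflect N := by
  ext; simp [Polynomial.finsetSum_coeff]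

lemma reflect_succ_eq (N : ℕ) (p : Polynomial ℤ) (hp : p.natDegree ≤ N) :
    p.reflect (1 + N) = X * p.reflect N := by
  have := reflect_mul (1 : Polynomial ℤ) p (F := 1) (by simp) hp
  simpa using this

lemma reflect_X_sub_one_mul (N : ℕ) (p : Polynomial ℤ) (hp : p.natDegree ≤ N) :
    ((X - 1) * p).reflect (1 + N) = (1 - X) * p.reflect N := by
  rw [reflect_mul (X - 1 : Polynomial ℤ) p (F := 1) (natDegree_X_sub_C_le 1) hp, sub_eq_add_neg,
    reflect_add, reflect_neg', reflect_one_X, reflect_one, pow_one, ← sub_eq_add_neg]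

lemma eval_one_reflect (N : ℕ) (p : Polynomial ℤ) (hp : p.natDegree ≤ N) :
    (p.reflect N).eval 1 = p.eval 1 := by
  let : Invertible (1 : ℤ) := invertibleOne
  have := eval₂_reflect_mul_pow (RingHom.id ℤ) (1 : ℤ) N p hp
  simpa [eval₂_eq_eval_map] using this

lemma toInc_dlt : toInc (dlt : β → β → Polynomial ℤ) = 1 := by
  ext1 s t hst
  rw [toInc_apply _ hst, IncidenceAlgebra.one_apply, dlt]

variable [LocallyFiniteOrder β]

lemma toInc_conv (a b : β → β → Polynomial ℤ) : toInc (conv a b) = toInc a * toInc b := by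
  ext1 s t hst
  rw [toInc_apply _ hst, IncidenceAlgebra.mul_apply]
  refine Finset.sum_congr rfl fun w hw => ?_
  rw [Finset.mem_Icc] at hw
  rw [toInc_apply _ hw.1, toInc_apply _ hw.2]

/-- Reversal is multiplicative on the subalgebra `I_ρ(P)`. -/
lemma rev_conv {ρ : β → β → ℕ} (hρ : IsWeakRank ρ) {a b : β → β → Polynomial ℤ}
    (ha : ∀ s t, s ≤ t → (a s t).natDegree ≤ ρ s t)
    (hb : ∀ s t, s ≤ t → (b s t).natDegree ≤ ρ s t) (s t : β) :
    rev ρ (conv a b) s t = conv (rev ρ a) (rev ρ b) s t := by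
  simp only [rev, conv, reflect_sum']
  refine Finset.sum_congr rfl fun w hw => ?_
  rw [Finset.mem_Icc] at hw
  rw [hρ.add hw.1 hw.2, reflect_mul _ _ (ha _ _ hw.1) (hb _ _ hw.2)]

/-- Well-founded induction on the size of the interval, in a form that fixes neither end. -/
lemma interval_induction {Q : β → β → Prop}
    (step : ∀ s t, s ≤ t →
      (∀ u v, s ≤ u → u ≤ v → v ≤ t → (s < u ∨ v < t) → Q u v) → Q s t) :
    ∀ s t, s ≤ t → Q s t := by
  have key : ∀ n : ℕ, ∀ s t : β, s ≤ t → (Finset.Icc s t).card = n → Q s t := by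
    intro n
    induction n using Nat.strong_induction_on with
    | _ n ih =>
      intro s t hst hn
      refine step s t hst fun u v hsu huv hvt hlt => ih _ ?_ u v huv rfl
      rw [← hn]
      apply Finset.card_lt_card
      rcases hlt with h | h
      · exact Finset.Icc_ssubset_Icc_left hst h hvt
      · exact Finset.Icc_ssubset_Icc_right hst hsu h
  exact fun s t hst => key _ s t hst rfl

lemma kernel_eval_one {ρ : β → β → ℕ} {κ : β → β → Polynomial ℤ} (hκ : IsKernel ρ κ) :
    ∀ s t, s ≤ t → s ≠ t → (κ s t).eval 1 = 0 := by
  refine interval_induction fun s t hst ih hne => ?_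
  have h := congrArg (Polynomial.eval 1) (hκ.left hst)
  rw [conv, dlt, if_neg hne, eval_finsetSum, eval_zero] at h
  -- Only the two end points of the interval contribute, each with `κ_{st}(1)`.
  rw [Finset.sum_eq_add_of_mem s t (by simp [hst]) (by simp [hst]) hne] at h
  · simp only [eval_mul, rev] at h
    rw [eval_one_reflect _ _ (hκ.degLE le_rfl), eval_one_reflect _ _ (hκ.degLE hst),
      hκ.diag, hκ.diag] at h
    simp only [eval_one] at h
    omega
  · intro w hw hw'
    rw [Finset.mem_Icc] at hw
    rw [eval_mul, ih w t hw.1 hw.2 le_rfl (Or.inl (lt_of_le_of_ne hw.1 hw'.1.symm)) hw'.2,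
      mul_zero]

lemma red_relation {ρ : β → β → ℕ} {κ : β → β → Polynomial ℤ} (hκ : IsKernel ρ κ)
    {s t : β} (hst : s ≤ t) :
    (X - 1) * red κ s t = κ s t - X * dlt s t := by
  by_cases h : s = t
  · subst h
    simp only [red, dlt, hκ.diag, if_true]
    ring
  · have h1 : IsRoot (κ s t) 1 := kernel_eval_one hκ s t hst h
    have h2 := mul_divByMonic_eq_iff_isRoot.2 h1
    rw [C_1] at h2
    simp [red, dlt, h, h2]

lemma red_natDegree {ρ : β → β → ℕ} {κ : β → β → Polynomial ℤ} (hκ : IsKernel ρ κ)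
    (s t : β) (hst : s ≤ t) : (red κ s t).natDegree ≤ ρ s t := by
  by_cases h : s = t
  · simp [red, h]
  · rw [red, if_neg h, ← C_1, natDegree_divByMonic _ (monic_X_sub_C 1)]
    exact (Nat.sub_le _ _).trans (hκ.degLE hst)

lemma rev_red_relation {ρ : β → β → ℕ} (hρ : IsWeakRank ρ) {κ : β → β → Polynomial ℤ}
    (hκ : IsKernel ρ κ) {s t : β} (hst : s ≤ t) :
    (1 - X) * rev ρ (red κ) s t = X * rev ρ κ s t - dlt s t := by
  by_cases h : s = t
  · subst h
    simp only [rev, red, dlt, hκ.diag, hρ.self, if_true, reflect_neg', reflect_one]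
    ring
  · have h1 := red_relation hκ hst
    rw [dlt, if_neg h, mul_zero, sub_zero] at h1
    rw [rev, rev, dlt, if_neg h, sub_zero, ← reflect_X_sub_one_mul _ _ (red_natDegree hκ s t hst),
      h1, reflect_succ_eq _ _ (hκ.degLE hst)]

/-- The Chow function lies in `I_ρ(P)`, by the recursion `ℋ_{st} = ∑_{s < w ≤ t} κ̄_{sw} ℋ_{wt}`
for `s < t`. -/
lemma chow_natDegree {ρ : β → β → ℕ} (hρ : IsWeakRank ρ) {κ H : β → β → Polynomial ℤ}
    (hκ : IsKernel ρ κ) (hH : IsChow κ H) :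
    ∀ s t, s ≤ t → (H s t).natDegree ≤ ρ s t := by
  refine interval_induction fun s t hst ih => ?_
  have h := hH.left hst
  rw [conv, ← Finset.add_sum_erase _ _ (Finset.left_mem_Icc.2 hst)] at h
  have h2 : H s t = dlt s t + ∑ w ∈ (Finset.Icc s t).erase s, red κ s w * H w t := by
    rw [red, if_pos rfl] at h
    linear_combination -h
  rw [h2]
  refine natDegree_add_le_of_degree_le ?_ (natDegree_sum_le_of_forall_le _ _ fun w hw => ?_)
  · rw [dlt]; split_ifs <;> simp
  · rw [Finset.mem_erase, Finset.mem_Icc] at hw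
    obtain ⟨hne, hsw, hwt⟩ := hw
    rw [hρ.add hsw hwt]
    exact natDegree_mul_le_of_le (red_natDegree hκ s w hsw)
      (ih w t hsw hwt le_rfl (Or.inl (lt_of_le_of_ne hsw hne.symm)))

/-- The algebraic core, in an arbitrary `ℤ[x]`-algebra: with `K`, `A`, `h` for `κ`, `κ̄`, `ℋ` and
`Kr`, `Ar`, `Hr` for their reversals, `κ ℋ = x ℋ + (1 - x)` and `ℋ^rev` agrees with `κ ℋ` up to
the factor `1 - x`. -/
lemma rev_chow_aux {R : Type*} [Ring R] [Algebra (Polynomial ℤ) R] {K Kr A Ar h Hr : R}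
    (hKK : Kr * K = 1) (hAH : A * h = -1) (hAHr : Ar * Hr = -1) (hHAr : Hr * Ar = -1)
    (hA : (X - 1 : Polynomial ℤ) • A = K - (X : Polynomial ℤ) • 1)
    (hAr : (1 - X : Polynomial ℤ) • Ar = (X : Polynomial ℤ) • Kr - 1) :
    K * h = (X : Polynomial ℤ) • h + (1 - X : Polynomial ℤ) • 1 ∧
      (1 - X : Polynomial ℤ) • (K * h) = (1 - X : Polynomial ℤ) • Hr := by
  have h1 : K * h = (X : Polynomial ℤ) • h + (1 - X : Polynomial ℤ) • 1 := by
    have := congrArg (· * h) hA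
    simp only [smul_mul_assoc, hAH, sub_mul, one_mul] at this
    rw [← sub_eq_iff_eq_add', ← this, smul_neg, ← neg_smul, neg_sub]
  have h2 : (1 - X : Polynomial ℤ) • (Ar * (K * h)) = (1 - X : Polynomial ℤ) • (Ar * Hr) := by
    rw [← smul_mul_assoc, hAr, sub_mul, smul_mul_assoc, ← mul_assoc, hKK, one_mul, one_mul, h1,
      hAHr, smul_neg, sub_add_cancel_left]
  refine ⟨h1, ?_⟩
  -- Cancel `Ar` by multiplying with `Hr` on the left.
  have h3 := congrArg (Hr * ·) h2
  simp only [mul_smul_comm, ← mul_assoc Hr, hHAr] at h3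
  simpa only [neg_mul, one_mul, smul_neg, neg_inj] using h3

/-- The identity `ℋ^rev = x ℋ + (1 - x) δ`, which encodes the symmetry on all intervals at once. -/
lemma toInc_rev_chow {ρ : β → β → ℕ} (hρ : IsWeakRank ρ) {κ H : β → β → Polynomial ℤ}
    (hκ : IsKernel ρ κ) (hH : IsChow κ H) :
    toInc (rev ρ H) = (X : Polynomial ℤ) • toInc H + (1 - X : Polynomial ℤ) • 1 := by
  have hdegA := red_natDegree hκ
  have hdegH := chow_natDegree hρ hκ hH
  have hrevneg : ∀ s t : β, rev ρ (fun s t => -dlt s t) s t = -dlt s t := by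
    intro s t
    by_cases h : s = t
    · subst h
      simp [rev, dlt, hρ.self]
    · simp [rev, dlt, h]
  have hneg : toInc (fun s t : β => -dlt s t) = -1 := by
    rw [← toInc_dlt]
    ext1 s t hst
    rw [toInc_apply _ hst, IncidenceAlgebra.neg_apply, toInc_apply _ hst]
  have hKK : toInc (rev ρ κ) * toInc κ = 1 := by
    rw [← toInc_conv, ← toInc_dlt]
    exact toInc_congr fun s t hst => hκ.left hst
  have hAH : toInc (red κ) * toInc H = -1 := by
    rw [← toInc_conv, ← hneg]
    exact toInc_congr fun s t hst => hH.left hst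
  have hAHr : toInc (rev ρ (red κ)) * toInc (rev ρ H) = -1 := by
    rw [← toInc_conv, ← hneg]
    refine toInc_congr fun s t hst => ?_
    rw [← rev_conv hρ hdegA hdegH, ← hrevneg, rev, hH.left hst, rev]
  have hHAr : toInc (rev ρ H) * toInc (rev ρ (red κ)) = -1 := by
    rw [← toInc_conv, ← hneg]
    refine toInc_congr fun s t hst => ?_
    rw [← rev_conv hρ hdegH hdegA, ← hrevneg, rev, hH.right hst, rev]
  have hA : (X - 1 : Polynomial ℤ) • toInc (red κ) = toInc κ - (X : Polynomial ℤ) • 1 := by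
    rw [← toInc_dlt]
    ext1 s t hst
    simpa [IncidenceAlgebra.constSMul_apply, IncidenceAlgebra.sub_apply, toInc_apply _ hst]
      using red_relation hκ hst
  have hAr : (1 - X : Polynomial ℤ) • toInc (rev ρ (red κ)) =
      (X : Polynomial ℤ) • toInc (rev ρ κ) - 1 := by
    rw [← toInc_dlt]
    ext1 s t hst
    simpa [IncidenceAlgebra.constSMul_apply, IncidenceAlgebra.sub_apply, toInc_apply _ hst]
      using rev_red_relation hρ hκ hst
  obtain ⟨h1, h3⟩ := rev_chow_aux hKK hAH hAHr hHAr hA hAr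
  rw [← h1]
  ext1 s t _
  have h4 := congrArg (fun f : IncidenceAlgebra (Polynomial ℤ) β => f s t) h3
  simp only [IncidenceAlgebra.constSMul_apply, smul_eq_mul] at h4
  have hX : (1 - X : Polynomial ℤ) ≠ 0 := by
    rw [← neg_sub, neg_ne_zero]
    exact X_sub_C_ne_zero 1
  exact (mul_left_cancel₀ hX h4).symm

end ChowSymmetry

/-- Proposition 3.4(ii): the Chow function is symmetric, i.e.
`ℋ_{st}(x) = x^{ρ_{st}-1} ℋ_{st}(1/x)` for every `s < t`. -/
theorem chow_symmetric [PartialOrder α] [LocallyFiniteOrder α]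
    (ρ : α → α → ℕ) (hρ : IsWeakRank ρ)
    (κ : α → α → Polynomial ℤ) (hκ : IsKernel ρ κ)
    (H : α → α → Polynomial ℤ) (hH : IsChow κ H)
    (s t : α) (hst : s < t) :
    PolySymm (ρ s t - 1) (H s t) := by
  have hdeg := chow_natDegree hρ hκ hH s t hst.le
  have hpos := hρ.pos hst
  have key : (H s t).reflect (ρ s t) = X * H s t := by
    have h := congrArg (fun f : IncidenceAlgebra (Polynomial ℤ) α => f s t)
      (toInc_rev_chow hρ hκ hH)
    simpa [IncidenceAlgebra.constSMul_apply, IncidenceAlgebra.add_apply, toInc_apply _ hst.le,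
      hst.ne, rev] using h
  have hdeg' : (H s t).natDegree ≤ ρ s t - 1 := by
    by_cases h0 : H s t = 0
    · simp [h0]
    -- The left side of `key` still has degree at most `ρ s t`, hence so does `X * H s t`.
    have h1 : (X * H s t).natDegree ≤ ρ s t := by
      rw [← key]
      exact natDegree_reflect_le.trans (by simp [hdeg])
    rw [natDegree_X_mul h0] at h1
    omega
  refine ⟨hdeg', ?_⟩
  have h1 := reflect_succ_eq _ _ hdeg'
  rw [Nat.add_sub_cancel' hpos, key] at h1
  exact (mul_left_cancel₀ X_ne_zero h1).symm
end

section
/- Let κ be a (P,ρ)-kernel on a locally finite weakly ranked poset (P,ρ), with right KLS function f, left KLS function g, and Chow function ℋ. Then for every s < t in P: ℋ_{st}(x) = (f^rev_{st}(x) − f_{st}(x))/(x−1) + Σ_{s<w<t} ℋ_{sw}(x)·(f^rev_{wt}(x) − x·f_{wt}(x))/(x−1), and also ℋ_{st}(x) = (g^rev_{st}(x) − g_{st}(x))/(x−1) + Σ_{s<w<t} (g^rev_{sw}(x) − x·g_{sw}(x))/(x−1)·ℋ_{wt}(x). -/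
/-!
The identities are instances of `H * (κ - X δ) = (κ - X δ) * H = -(X - 1) δ` in the incidence
algebra. This holds because `κ - X δ = (X - 1) κ̄` (`X_sub_one_mul_red`), i.e. because `X - 1`
divides `κ s t` for `s < t`: at `x = 1` the reversal is invisible, so `κ(1)` is a unipotent
involution over `ℤ`, hence the identity (`eval_one_kernel`).

Multiplying on the right by `f` and using `κ f = f^rev` gives `H (f^rev - X f) = -(X - 1) f`;
multiplying on the left by `g` gives `(g^rev - X g) H = -(X - 1) g`. Since `H`, `f`, `g` are `1` on
the diagonal, isolating the two endpoint terms of these convolutions on `[s, t]` yields the claim.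
-/

open Finset Polynomial
open scoped Classical

section ChowDecomposition

variable {α : Type*} [PartialOrder α] [LocallyFiniteOrder α]

theorem sum_Icc_eq_endpoints_add_sum_Ioo {M : Type*} [AddCommMonoid M] {s t : α} (hst : s < t)
    (F : α → M) : ∑ w ∈ Finset.Icc s t, F w = F s + F t + ∑ w ∈ Finset.Ioo s t, F w := by
  rw [← Finset.Ioc_insert_left hst.le, Finset.sum_insert (by simp),
    ← Finset.Ioo_insert_right hst, Finset.sum_insert (by simp), add_assoc]

theorem conv_self (a b : α → α → Polynomial ℤ) (s : α) : conv a b s s = a s s * b s s := by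
  simp [conv]

theorem conv_congr {a a' b b' : α → α → Polynomial ℤ}
    (ha : ∀ ⦃s t : α⦄, s ≤ t → a s t = a' s t) (hb : ∀ ⦃s t : α⦄, s ≤ t → b s t = b' s t)
    (s t : α) : conv a b s t = conv a' b' s t := by
  refine Finset.sum_congr rfl fun w hw => ?_
  rw [Finset.mem_Icc] at hw
  rw [ha hw.1, hb hw.2]

theorem conv_assoc (a b c : α → α → Polynomial ℤ) (s t : α) :
    conv (conv a b) c s t = conv a (conv b c) s t := by
  simp only [conv, Finset.sum_mul, Finset.mul_sum, mul_assoc]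
  refine Finset.sum_comm' fun w v => ?_
  simp only [Finset.mem_Icc]
  constructor
  · rintro ⟨⟨_, hwt⟩, hsv, hvw⟩
    exact ⟨⟨hvw, hwt⟩, hsv, hvw.trans hwt⟩
  · rintro ⟨⟨hvw, hwt⟩, hsv, _⟩
    exact ⟨⟨hsv.trans hvw, hwt⟩, hsv, hvw⟩

/-- The element `p δ` of the incidence algebra, for a polynomial `p`. -/
noncomputable def scal (p : Polynomial ℤ) : α → α → Polynomial ℤ := fun s t => p * dlt s t

theorem conv_scal (a : α → α → Polynomial ℤ) (p : Polynomial ℤ) {s t : α} (hst : s ≤ t) :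
    conv a (scal p) s t = p * a s t := by
  simp [conv, scal, dlt, hst, mul_comm]

theorem scal_conv (a : α → α → Polynomial ℤ) (p : Polynomial ℤ) {s t : α} (hst : s ≤ t) :
    conv (scal p) a s t = p * a s t := by
  simp [conv, scal, dlt, hst]

/-- A kernel specializes to the identity at `x = 1`: there `κ^rev` and `κ` agree, so `κ(1)` squares
to the identity, and induction on the interval turns this into `2 κ_{st}(1) = 0`. -/
theorem eval_one_kernel {ρ : α → α → ℕ} {κ : α → α → Polynomial ℤ} (hκ : IsKernel ρ κ)
    {s t : α} (hst : s < t) : (κ s t).eval 1 = 0 := by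
  have key : ∀ n : ℕ, ∀ s t : α, s < t → (Finset.Icc s t).card ≤ n → (κ s t).eval 1 = 0 := by
    intro n
    induction n with
    | zero =>
      intro s t hst hn
      have hs : s ∈ Finset.Icc s t := Finset.left_mem_Icc.2 hst.le
      rw [Finset.card_eq_zero.1 (Nat.le_zero.1 hn)] at hs
      simp at hs
    | succ n ih =>
      intro s t hst hn
      have hrev : ∀ ⦃a b : α⦄, a ≤ b → (rev ρ κ a b).eval 1 = (κ a b).eval 1 := by
        intro a b hab
        let _ : Invertible (1 : ℤ) := invertibleOne
        have h := Polynomial.eval₂_reflect_mul_pow (RingHom.id ℤ) 1 (ρ a b) (κ a b) (hκ.degLE hab)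
        rwa [invOf_one, one_pow, mul_one] at h
      have h := congrArg (Polynomial.eval 1) (hκ.right hst.le)
      have hinner : ∑ w ∈ Finset.Ioo s t, (κ s w).eval 1 * (rev ρ κ w t).eval 1 = 0 := by
        refine Finset.sum_eq_zero fun w hw => ?_
        rw [Finset.mem_Ioo] at hw
        have hlt : (Finset.Icc s w).card < (Finset.Icc s t).card :=
          Finset.card_lt_card (Finset.Icc_ssubset_Icc_right hst.le le_rfl hw.2)
        rw [ih s w hw.1 (by omega), zero_mul]
      simp only [conv, dlt, if_neg hst.ne, Polynomial.eval_finsetSum, Polynomial.eval_mul,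
        Polynomial.eval_zero] at h
      rw [sum_Icc_eq_endpoints_add_sum_Ioo hst, hinner, hrev hst.le, hrev le_rfl, hκ.diag,
        hκ.diag] at h
      simp only [Polynomial.eval_one] at h
      omega
  exact key _ s t hst le_rfl

/-- The reduced kernel satisfies `(X - 1) κ̄ = κ - X δ`; in particular the division by `X - 1` in
its definition is exact. -/
theorem X_sub_one_mul_red {ρ : α → α → ℕ} {κ : α → α → Polynomial ℤ} (hκ : IsKernel ρ κ)
    {s t : α} (hst : s ≤ t) : (X - 1) * red κ s t = κ s t - scal X s t := by
  rcases hst.eq_or_lt with rfl | hlt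
  · simp [red, scal, dlt, hκ.diag]
  · have h := Polynomial.mul_divByMonic_eq_iff_isRoot.2
      (show (κ s t).IsRoot 1 from eval_one_kernel hκ hlt)
    rw [Polynomial.C_1] at h
    simp [red, scal, dlt, hlt.ne, h]

theorem chow_diag {κ H : α → α → Polynomial ℤ} (hH : IsChow κ H) (s : α) : H s s = 1 := by
  have h := hH.right (le_refl s)
  rw [conv_self] at h
  simpa [red, dlt] using h

/-- `H (κ - X δ) = -(X - 1) δ`. -/
theorem chow_conv {ρ : α → α → ℕ} {κ H : α → α → Polynomial ℤ} (hκ : IsKernel ρ κ)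
    (hH : IsChow κ H) ⦃s t : α⦄ (hst : s ≤ t) :
    conv H (κ - scal X) s t = scal (-(X - 1)) s t := by
  have h : conv H (κ - scal X) s t = (X - 1) * conv H (red κ) s t := by
    rw [conv, conv, Finset.mul_sum]
    refine Finset.sum_congr rfl fun w hw => ?_
    rw [Pi.sub_apply, Pi.sub_apply, ← X_sub_one_mul_red hκ (Finset.mem_Icc.1 hw).2]
    ring
  rw [h, hH.right hst, scal]
  ring

/-- `(κ - X δ) H = -(X - 1) δ`. -/
theorem conv_chow {ρ : α → α → ℕ} {κ H : α → α → Polynomial ℤ} (hκ : IsKernel ρ κ)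
    (hH : IsChow κ H) ⦃s t : α⦄ (hst : s ≤ t) :
    conv (κ - scal X) H s t = scal (-(X - 1)) s t := by
  have h : conv (κ - scal X) H s t = (X - 1) * conv (red κ) H s t := by
    rw [conv, conv, Finset.mul_sum]
    refine Finset.sum_congr rfl fun w hw => ?_
    rw [Pi.sub_apply, Pi.sub_apply, ← X_sub_one_mul_red hκ (Finset.mem_Icc.1 hw).1]
    ring
  rw [h, hH.left hst, scal]
  ring

/-- `H (f^rev - X f) = -(X - 1) f` for the right KLS function `f`. -/
theorem chow_conv_rightKLS {ρ : α → α → ℕ} {κ H f : α → α → Polynomial ℤ} (hκ : IsKernel ρ κ)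
    (hH : IsChow κ H) (hf : IsRightKLS ρ κ f) {s t : α} (hst : s ≤ t) :
    ∑ w ∈ Finset.Icc s t, H s w * (rev ρ f w t - X * f w t) = -(X - 1) * f s t := by
  have hfr : ∀ ⦃a b : α⦄, a ≤ b → conv (κ - scal X) f a b = rev ρ f a b - X * f a b := by
    intro a b hab
    rw [hf.rev_eq hab, ← scal_conv f X hab]
    simp [conv, sub_mul]
  calc ∑ w ∈ Finset.Icc s t, H s w * (rev ρ f w t - X * f w t)
      = conv H (conv (κ - scal X) f) s t :=
        (conv_congr (fun _ _ _ => rfl) hfr s t).symm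
    _ = conv (scal (-(X - 1))) f s t := by
        rw [← conv_assoc]
        exact conv_congr (chow_conv hκ hH) (fun _ _ _ => rfl) s t
    _ = -(X - 1) * f s t := scal_conv f _ hst

/-- `(g^rev - X g) H = -(X - 1) g` for the left KLS function `g`. -/
theorem leftKLS_conv_chow {ρ : α → α → ℕ} {κ H g : α → α → Polynomial ℤ} (hκ : IsKernel ρ κ)
    (hH : IsChow κ H) (hg : IsLeftKLS ρ κ g) {s t : α} (hst : s ≤ t) :
    ∑ w ∈ Finset.Icc s t, (rev ρ g s w - X * g s w) * H w t = -(X - 1) * g s t := by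
  have hgr : ∀ ⦃a b : α⦄, a ≤ b → conv g (κ - scal X) a b = rev ρ g a b - X * g a b := by
    intro a b hab
    rw [hg.rev_eq hab, ← conv_scal g X hab]
    simp [conv, mul_sub]
  calc ∑ w ∈ Finset.Icc s t, (rev ρ g s w - X * g s w) * H w t
      = conv (conv g (κ - scal X)) H s t :=
        (conv_congr hgr (fun _ _ _ => rfl) s t).symm
    _ = conv g (scal (-(X - 1))) s t := by
        rw [conv_assoc]
        exact conv_congr (fun _ _ _ => rfl) (conv_chow hκ hH) s t
    _ = -(X - 1) * g s t := conv_scal g _ hst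

end ChowDecomposition

/-- Theorem 3.8 (numerical canonical decomposition): for every `s < t`,
`ℋ_{st} = (f^rev_{st} - f_{st})/(x-1) + Σ_{s<w<t} ℋ_{sw} (f^rev_{wt} - x f_{wt})/(x-1)` and
`ℋ_{st} = (g^rev_{st} - g_{st})/(x-1) + Σ_{s<w<t} (g^rev_{sw} - x g_{sw})/(x-1) ℋ_{wt}`.
(The identities are stated after clearing the denominator `x - 1`.) -/
theorem numerical_canonical_decomposition [PartialOrder α] [LocallyFiniteOrder α]
    (ρ : α → α → ℕ) (hρ : IsWeakRank ρ)
    (κ : α → α → Polynomial ℤ) (hκ : IsKernel ρ κ)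
    (H : α → α → Polynomial ℤ) (hH : IsChow κ H)
    (f : α → α → Polynomial ℤ) (hf : IsRightKLS ρ κ f)
    (g : α → α → Polynomial ℤ) (hg : IsLeftKLS ρ κ g)
    (s t : α) (hst : s < t) :
    (X - 1) * H s t
        = (rev ρ f s t - f s t)
          + ∑ w ∈ Finset.Ioo s t, H s w * (rev ρ f w t - X * f w t) ∧
    (X - 1) * H s t
        = (rev ρ g s t - g s t)
          + ∑ w ∈ Finset.Ioo s t, (rev ρ g s w - X * g s w) * H w t := by
  constructor
  · have h := chow_conv_rightKLS hκ hH hf hst.le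
    rw [sum_Icc_eq_endpoints_add_sum_Ioo hst, chow_diag hH, hf.rev_eq le_rfl, conv_self, hκ.diag,
      hf.diag] at h
    linear_combination -h
  · have h := leftKLS_conv_chow hκ hH hg hst.le
    rw [sum_Icc_eq_endpoints_add_sum_Ioo hst, chow_diag hH, hg.rev_eq le_rfl, conv_self, hκ.diag,
      hg.diag] at h
    linear_combination -h
end
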